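/- Let 𝔟 be the Borel subalgebra of sl₂ spanned by h and e, and let 𝒩 be the category of 𝔟-modules that are finitely generated, h-diagonalizable, and free as modules over U(e) = ℂ[e]. Then for every finite-dimensional sl₂-module V and every N ∈ 𝒩, the 𝔟-module (Res^{sl₂}_𝔟 V) ⊗_ℂ N again belongs to 𝒩; consequently 𝒩 carries the structure of a 𝒞-module category by restriction and tensoring. -/

import Mathlib

/-!
Statement 7 (Mazorchuk-Zhu, Lemma on the category `𝒩` of `𝔟`-modules).

Let `𝔟` be the Borel subalgebra of `sl₂` spanned by `h` and `e` (so a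
`𝔟`-module is the data of two operators `hN`, `eN` with `[hN, eN] = 2 eN`),
and let `𝒩` be the category of `𝔟`-modules that are finitely generated,
`h`-diagonalizable and free over `U(e) = ℂ[e]`.  Then for every finite
dimensional `sl₂`-module `V` (given by operators `eV`, `fV`, `hV` satisfying
the `sl₂` relations) and every `N ∈ 𝒩`, the `𝔟`-module
`(Res^{sl₂}_𝔟 V) ⊗_ℂ N` (with operators `eV ⊗ 1 + 1 ⊗ eN` and
`hV ⊗ 1 + 1 ⊗ hN`) again belongs to `𝒩`; consequently `𝒩` carries the
structure of a `𝒞`-module category by restriction and tensoring.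
-/

open TensorProduct Polynomial

/-!
Write `c = f e`. If `f ^ r = 0` and `e ^ s = 0`, then `e ^ r f ^ r` and `f ^ s e ^ s` both vanish,
and both factor in the commutative algebra `K[c, h]`: the former into the elements
`c + (i + 1)(h - i)` with `i < r`, the latter into the elements `c - j(h + j + 1)` with `j < s`.
The difference of two such factors is a nonzero multiple of `h - (i - j)`, and this forces
`∏ (h - k) = 0`, the product running over the integers `-s < k < r`. Hence `h` is diagonalizable on
every finite-dimensional module, and so on `V ⊗ N`.

For freeness write `N = R[X] ⊗ W`. On `V ⊗ N = R[X] ⊗ (V ⊗ W)` the operator `e` is `X + φ` for an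
endomorphism `φ` of `V ⊗ W`, and the substitution `X ↦ X + φ`, with inverse `X ↦ X - φ`,
turns it into multiplication by `X`.
-/

section KroneckerSum

variable {R V N : Type*} [CommRing R] [AddCommGroup V] [Module R V] [AddCommGroup N] [Module R N]

/-- The Kronecker sum `a ⊗ 1 + 1 ⊗ b`, through which a Lie algebra element acts on a tensor product
when it acts by `a` and `b` on the factors. -/
def kroneckerSum (a : Module.End R V) (b : Module.End R N) : Module.End R (V ⊗[R] N) :=
  a.rTensor N + b.lTensor V

@[simp]
lemma kroneckerSum_tmul (a : Module.End R V) (b : Module.End R N) (v : V) (n : N) :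
    kroneckerSum a b (v ⊗ₜ n) = a v ⊗ₜ n + v ⊗ₜ b n := rfl

lemma lie_kroneckerSum (a a' : Module.End R V) (b b' : Module.End R N) :
    ⁅kroneckerSum a b, kroneckerSum a' b'⁆ = kroneckerSum ⁅a, a'⁆ ⁅b, b'⁆ := by
  ext v n
  simp only [TensorProduct.AlgebraTensorModule.curry_apply, TensorProduct.curry_apply,
    LinearMap.restrictScalars_self, Ring.lie_def, LinearMap.sub_apply, Module.End.mul_apply,
    kroneckerSum_tmul, map_add, TensorProduct.sub_tmul, TensorProduct.tmul_sub]
  abel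

lemma smul_kroneckerSum (c : R) (a : Module.End R V) (b : Module.End R N) :
    c • kroneckerSum a b = kroneckerSum (c • a) (c • b) := by
  simp only [kroneckerSum, smul_add, LinearMap.rTensor_smul, LinearMap.lTensor_smul]

lemma lTensor_kroneckerSum {N' : Type*} [AddCommGroup N'] [Module R N'] (a : Module.End R V)
    {b : Module.End R N} {b' : Module.End R N'} {g : N →ₗ[R] N'} (hg : ∀ n, g (b n) = b' (g n))
    (z : V ⊗[R] N) : g.lTensor V (kroneckerSum a b z) = kroneckerSum a b' (g.lTensor V z) := by
  induction z with
  | zero => simp only [map_zero]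
  | add z w hz hw => simp only [map_add, hz, hw]
  | tmul v n => simp only [kroneckerSum_tmul, map_add, LinearMap.lTensor_tmul, hg]

lemma leftComm_kroneckerSum {W : Type*} [AddCommGroup W] [Module R W] (a : Module.End R V)
    (b : Module.End R N) (c : Module.End R W) (z : V ⊗[R] (N ⊗[R] W)) :
    TensorProduct.leftComm R V N W (kroneckerSum a (kroneckerSum b c) z) =
      kroneckerSum b (kroneckerSum a c) (TensorProduct.leftComm R V N W z) := by
  refine LinearMap.congr_fun (f := (TensorProduct.leftComm R V N W).toLinearMap ∘ₗ
    kroneckerSum a (kroneckerSum b c)) (g := kroneckerSum b (kroneckerSum a c) ∘ₗ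
    (TensorProduct.leftComm R V N W).toLinearMap) ?_ z
  ext v n w
  simp only [TensorProduct.AlgebraTensorModule.curry_apply, TensorProduct.curry_apply,
    LinearMap.restrictScalars_self, LinearMap.comp_apply, LinearEquiv.coe_coe, map_add,
    kroneckerSum_tmul, TensorProduct.tmul_add, TensorProduct.leftComm_tmul]
  abel

end KroneckerSum

section FiniteGeneration

variable {R V N ι : Type*} [CommRing R] [AddCommGroup V] [Module R V] [AddCommGroup N] [Module R N]

/-- Finite generation of `N` as a module over the algebra generated by the operators `a i`,
expressed through submodules stable under all of them. -/
def IsFGUnder (a : ι → Module.End R N) : Prop :=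
  ∃ s : Finset N, ∀ p : Submodule R N, (∀ i, ∀ x ∈ p, a i x ∈ p) → (s : Set N) ⊆ p → p = ⊤

lemma isFGUnder_pair {a b : Module.End R N} :
    IsFGUnder ![a, b] ↔ ∃ s : Finset N, ∀ p : Submodule R N,
      (∀ x ∈ p, a x ∈ p) → (∀ x ∈ p, b x ∈ p) → (s : Set N) ⊆ p → p = ⊤ := by
  simp only [IsFGUnder, Fin.forall_fin_two, Matrix.cons_val_zero, Matrix.cons_val_one, and_imp]

lemma submodule_eq_top_of_forall_tmul_mem {p : Submodule R (V ⊗[R] N)}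
    (hp : ∀ v n, v ⊗ₜ[R] n ∈ p) : p = ⊤ := by
  rw [eq_top_iff, ← TensorProduct.span_tmul_eq_top, Submodule.span_le]
  rintro _ ⟨v, n, rfl⟩
  exact hp v n

theorem IsFGUnder.kroneckerSum [Module.Finite R V] {b : ι → Module.End R N} (hb : IsFGUnder b)
    (a : ι → Module.End R V) : IsFGUnder fun i => kroneckerSum (a i) (b i) := by
  classical
  obtain ⟨s, hs⟩ := hb
  obtain ⟨t, ht⟩ := Module.Finite.fg_top (R := R) (M := V)
  refine ⟨(t ×ˢ s).image fun x => x.1 ⊗ₜ[R] x.2, fun p hp hsp => ?_⟩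
  let q : Submodule R N := ⨅ v : V, p.comap (TensorProduct.mk R V N v)
  have mem_q {n : N} : n ∈ q ↔ ∀ v : V, v ⊗ₜ[R] n ∈ p := by
    simp only [q, Submodule.mem_iInf, Submodule.mem_comap, TensorProduct.mk_apply]
  have hq_stable (i : ι) (n : N) (hn : n ∈ q) : b i n ∈ q := mem_q.2 fun v => by
    have h_sum : a i v ⊗ₜ[R] n + v ⊗ₜ[R] b i n ∈ p := hp i _ (mem_q.1 hn v)
    exact (p.add_mem_iff_right (mem_q.1 hn _)).1 h_sum
  have hq_gen : (s : Set N) ⊆ q := fun n hn => mem_q.2 fun v => by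
    have h_span : Submodule.span R t ≤ p.comap ((TensorProduct.mk R V N).flip n) :=
      Submodule.span_le.2 fun w hw => hsp <| Finset.mem_coe.2 <|
        Finset.mem_image.2 ⟨(w, n), Finset.mk_mem_product hw hn, rfl⟩
    exact h_span (ht ▸ Submodule.mem_top)
  have hq : q = ⊤ := hs q hq_stable hq_gen
  exact submodule_eq_top_of_forall_tmul_mem fun v n => mem_q.1 (hq ▸ Submodule.mem_top) v

end FiniteGeneration

section Diagonalizability

variable {R V N : Type*} [CommRing R] [AddCommGroup V] [Module R V] [AddCommGroup N] [Module R N]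

lemma tmul_mem_eigenspace_kroneckerSum {a : Module.End R V} {b : Module.End R N} {μ ν : R}
    {v : V} {n : N} (hv : v ∈ Module.End.eigenspace a μ) (hn : n ∈ Module.End.eigenspace b ν) :
    v ⊗ₜ[R] n ∈ Module.End.eigenspace (kroneckerSum a b) (μ + ν) := by
  rw [Module.End.mem_eigenspace_iff] at hv hn ⊢
  rw [kroneckerSum_tmul, hv, hn, TensorProduct.tmul_smul, ← TensorProduct.smul_tmul', add_smul]

theorem iSup_eigenspace_kroneckerSum_eq_top {a : Module.End R V} {b : Module.End R N}
    (ha : ⨆ μ, Module.End.eigenspace a μ = ⊤) (hb : ⨆ ν, Module.End.eigenspace b ν = ⊤) :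
    ⨆ μ, Module.End.eigenspace (kroneckerSum a b) μ = ⊤ := by
  let P := ⨆ μ, Module.End.eigenspace (kroneckerSum a b) μ
  have h_tmul_eigen {μ : R} {v : V} (hv : v ∈ Module.End.eigenspace a μ) :
      ⊤ ≤ P.comap (TensorProduct.mk R V N v) := by
    rw [← hb]
    exact iSup_le fun ν n hn =>
      Submodule.mem_iSup_of_mem (μ + ν) (tmul_mem_eigenspace_kroneckerSum hv hn)
  have h_tmul (n : N) : ⊤ ≤ P.comap ((TensorProduct.mk R V N).flip n) := by
    rw [← ha]
    exact iSup_le fun μ v hv => h_tmul_eigen hv Submodule.mem_top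
  exact submodule_eq_top_of_forall_tmul_mem fun v n => h_tmul n (Submodule.mem_top (x := v))

theorem ker_aeval_prod_X_sub_C_eq_iSup_eigenspace {K M : Type*} [Field K] [AddCommGroup M]
    [Module K M] (a : Module.End K M) (s : Finset K) :
    LinearMap.ker (aeval a (∏ μ ∈ s, (X - C μ))) = ⨆ μ ∈ s, Module.End.eigenspace a μ := by
  classical
  induction s using Finset.induction_on with
  | empty => simp [Module.End.one_eq_id]
  | insert μ s hμ ih =>
    have h_coprime : IsCoprime (X - C μ) (∏ ν ∈ s, (X - C ν)) :=
      IsCoprime.prod_right fun ν hν =>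
        isCoprime_X_sub_C_of_isUnit_sub (sub_ne_zero.2 (ne_of_mem_of_not_mem hν hμ).symm).isUnit
    rw [Finset.prod_insert hμ, ← sup_ker_aeval_eq_ker_aeval_mul_of_coprime a h_coprime, ih,
      Finset.iSup_insert, Module.End.eigenspace_def, map_sub, aeval_X, aeval_C,
      Algebra.algebraMap_eq_smul_one]

end Diagonalizability

lemma lie_pow_eq_smul_of_lie_eq_smul {R A : Type*} [CommRing R] [Ring A] [Algebra R A] {e h : A}
    {c : R} (he : ⁅h, e⁆ = c • e) (k : ℕ) : ⁅h, e ^ k⁆ = (k * c) • e ^ k := by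
  induction k with
  | zero => simp [Ring.lie_def]
  | succ k ih =>
    have leibniz : ⁅h, e ^ k * e⁆ = ⁅h, e ^ k⁆ * e + e ^ k * ⁅h, e⁆ := by
      simp only [Ring.lie_def]
      noncomm_ring
    rw [pow_succ, leibniz, ih, he, smul_mul_assoc, mul_smul_comm, ← add_smul]
    push_cast
    ring_nf

-- The nonzero powers of `e` are eigenvectors of `ad h` for pairwise distinct eigenvalues.
theorem isNilpotent_of_lie_eq_smul {K A : Type*} [Field K] [CharZero K] [Ring A] [Algebra K A]
    [FiniteDimensional K A] {e h : A} {c : K} (hc : c ≠ 0) (he : ⁅h, e⁆ = c • e) :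
    IsNilpotent e := by
  by_contra h_not_nil
  let ad_h : Module.End K A := LinearMap.mulLeft K h - LinearMap.mulRight K h
  have h_eigen (k : ℕ) : ad_h.HasEigenvalue (k * c) :=
    Module.End.hasEigenvalue_of_hasEigenvector (x := e ^ k)
      ⟨Module.End.mem_eigenspace_iff.2 (lie_pow_eq_smul_of_lie_eq_smul he k),
        fun h_zero => h_not_nil ⟨k, h_zero⟩⟩
  have h_inj : Function.Injective fun k : ℕ => (k * c : K) := fun _ _ h_eq =>
    Nat.cast_injective (mul_right_cancel₀ hc h_eq)
  exact Set.infinite_of_injective_forall_mem h_inj h_eigen ad_h.finite_hasEigenvalue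

/-- The defining relations of `sl₂`. Unlike `IsSl2Triple`, this allows `h = 0`, as happens on a
trivial module. -/
structure Sl2Relations {A : Type*} [Ring A] (e f h : A) : Prop where
  lie_h_e : ⁅h, e⁆ = 2 • e
  lie_h_f : ⁅h, f⁆ = -(2 • f)
  lie_e_f : ⁅e, f⁆ = h

namespace Sl2Relations

section Ring

variable {A : Type*} [Ring A] {e f h : A}

lemma symm (t : Sl2Relations e f h) : Sl2Relations f e (-h) where
  lie_h_e := by
    rw [← neg_neg (2 • f), ← t.lie_h_f]
    simp only [Ring.lie_def]
    noncomm_ring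
  lie_h_f := by
    rw [← t.lie_h_e]
    simp only [Ring.lie_def]
    noncomm_ring
  lie_e_f := by rw [← t.lie_e_f, Ring.lie_def, Ring.lie_def, neg_sub]

lemma e_mul_f (t : Sl2Relations e f h) : e * f = f * e + h := by
  rw [← t.lie_e_f, Ring.lie_def, add_sub_cancel]

lemma h_mul_f (t : Sl2Relations e f h) : h * f = f * (h - 2) := by
  have h_lie := t.lie_h_f
  rw [Ring.lie_def, sub_eq_iff_eq_add] at h_lie
  rw [h_lie]
  noncomm_ring

lemma commute_f_mul_e_h (t : Sl2Relations e f h) : Commute (f * e) h := by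
  have h_mul_e : h * e = e * (h + 2) := by
    have := t.symm.h_mul_f
    rw [neg_mul, neg_eq_iff_eq_neg] at this
    rw [this]
    noncomm_ring
  calc f * e * h = f * (e * (h + 2)) - 2 * (f * e) := by noncomm_ring
    _ = f * (h - 2) * e + 2 * (f * e) - 2 * (f * e) := by rw [← h_mul_e]; noncomm_ring
    _ = h * (f * e) := by rw [← t.h_mul_f]; noncomm_ring

lemma e_mul_f_pow_succ (t : Sl2Relations e f h) (n : ℕ) :
    e * f ^ (n + 1) = f ^ n * (f * e + (n + 1) * (h - n)) := by
  induction n with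
  | zero => simpa using t.e_mul_f
  | succ n ih =>
    have h_shift : (f * e + (n + 1) * (h - n)) * f
        = f * (f * e + (n + 1 + 1) * (h - (n + 1))) := by
      have h_comm : (n + 1 : A) * f = f * (n + 1) := by exact_mod_cast Nat.cast_comm (n + 1) f
      calc (f * e + (n + 1) * (h - n)) * f
          = f * (e * f) + (n + 1) * (h * f - n * f) := by noncomm_ring
        _ = f * (f * e + h) + (n + 1) * f * (h - 2 - n) := by
            rw [t.e_mul_f, t.h_mul_f, Nat.cast_comm]; noncomm_ring
        _ = f * (f * e + (n + 1 + 1) * (h - (n + 1))) := by rw [h_comm]; noncomm_ring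
    rw [pow_succ, ← mul_assoc, ih, mul_assoc, h_shift, ← mul_assoc, ← pow_succ, Nat.cast_succ]

variable {S : Type*} [CommRing S] {c x : S} (φ : S →+* A)

lemma map_prod_eq_e_pow_mul_f_pow (t : Sl2Relations e f h) (hc : φ c = f * e) (hx : φ x = h)
    (n : ℕ) : φ (∏ i ∈ Finset.range n, (c + (i + 1) * (x - i))) = e ^ n * f ^ n := by
  induction n with
  | zero => simp
  | succ n ih =>
    rw [Finset.prod_range_succ, map_mul, ih, pow_succ e, mul_assoc, mul_assoc, t.e_mul_f_pow_succ]
    simp only [map_add, map_mul, map_sub, map_natCast, map_one, hc, hx]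

lemma map_prod_eq_f_pow_mul_e_pow (t : Sl2Relations e f h) (hc : φ c = f * e) (hx : φ x = h)
    (n : ℕ) : φ (∏ j ∈ Finset.range n, (c - j * (x + j + 1))) = f ^ n * e ^ n := by
  have hc' : φ (c + x) = e * f := by rw [map_add, hc, hx, t.e_mul_f]
  have hx' : φ (-x) = -h := by rw [map_neg, hx]
  rw [← t.symm.map_prod_eq_e_pow_mul_f_pow φ hc' hx' n]
  congr 1
  exact Finset.prod_congr rfl fun j _ => by ring

end Ring

end Sl2Relations

section ProductsOverIntervals

variable {A : Type*} [CommRing A]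

lemma prod_Ioo_comp_add_right (x : ℤ → A) (m n c : ℤ) :
    ∏ k ∈ Finset.Ioo m n, x (k + c) = ∏ k ∈ Finset.Ioo (m + c) (n + c), x k := by
  rw [← Finset.map_add_right_Ioo, Finset.prod_map]
  rfl

lemma prod_Ioo_sub_one_left (x : ℤ → A) {m n : ℤ} (hmn : m < n) :
    ∏ k ∈ Finset.Ioo (m - 1) n, x k = x m * ∏ k ∈ Finset.Ioo m n, x k := by
  rw [← Finset.prod_insert Finset.left_notMem_Ioo, Finset.Ioo_insert_left hmn]
  congr 1
  ext k
  simp only [Finset.mem_Ioo, Finset.mem_Ico, Int.sub_one_lt_iff]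

-- Modulo the right-hand ideal for `(r + 1, s + 1)`, the product over `-s < k < r + 1` is killed by
-- `a 0` (shift the case `(r, s + 1)`) and by `b s` (the case `(r + 1, s)`), hence by `x (-s)`.
lemma prod_Ioo_mem_span_pair (a b : ℕ → A) (x : ℤ → A)
    (hx : ∀ i j : ℕ, x (i - j) ∈ Ideal.span {a i, b j}) (r s : ℕ) :
    ∏ k ∈ Finset.Ioo (-s : ℤ) r, x k ∈
      Ideal.span {∏ i ∈ Finset.range r, a i, ∏ j ∈ Finset.range s, b j} := by
  induction r generalizing a x s with
  | zero => simp [Ideal.span_insert]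
  | succ r ih_r =>
    induction s with
    | zero => simp [Ideal.span_insert]
    | succ s ih_s =>
      set J := Ideal.span {∏ i ∈ Finset.range (r + 1), a i, ∏ j ∈ Finset.range (s + 1), b j}
      let P := ∏ k ∈ Finset.Ioo (-s : ℤ) (r + 1 : ℕ), x k
      have h_a : a 0 * P ∈ J := by
        have hx' (i j : ℕ) : x (i - j + 1) ∈ Ideal.span {a (i + 1), b j} := by
          simpa [sub_add_eq_add_sub] using hx (i + 1) j
        obtain ⟨u, v, h_tail⟩ := Ideal.mem_span_pair.1 <|
          ih_r (fun i => a (i + 1)) (fun k => x (k + 1)) hx' (s + 1)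
        rw [prod_Ioo_comp_add_right, Nat.cast_succ, neg_add, neg_add_cancel_right] at h_tail
        refine Ideal.mem_span_pair.2 ⟨u, v * a 0, ?_⟩
        rw [Finset.prod_range_succ', show P = _ from h_tail.symm]
        ring
      have h_b : b s * P ∈ J := by
        obtain ⟨u, v, h_prev⟩ := Ideal.mem_span_pair.1 ih_s
        refine Ideal.mem_span_pair.2 ⟨u * b s, v, ?_⟩
        rw [Finset.prod_range_succ b, show P = _ from h_prev.symm]
        ring
      have h_split : ∏ k ∈ Finset.Ioo (-(s + 1 : ℕ) : ℤ) (r + 1 : ℕ), x k = x (-s) * P := by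
        rw [Nat.cast_succ, neg_add, ← sub_eq_add_neg, prod_Ioo_sub_one_left x (by omega)]
      obtain ⟨u, v, h_uv⟩ := Ideal.mem_span_pair.1 (hx 0 s)
      rw [Nat.cast_zero, zero_sub] at h_uv
      rw [h_split, ← h_uv, add_mul, mul_assoc, mul_assoc]
      exact J.add_mem (J.mul_mem_left u h_a) (J.mul_mem_left v h_b)

end ProductsOverIntervals

namespace Sl2Relations

variable {K A V : Type*} [Field K] [CharZero K] [Ring A] [Algebra K A]

lemma aeval_prod_eq_zero_of_injective {S : Type*} [CommRing S] [Algebra K S] {φ : S →ₐ[K] A}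
    (hφ : Function.Injective φ) {c x : S} {e f h : A} (t : Sl2Relations e f h)
    (hc : φ c = f * e) (hx : φ x = h) {r s : ℕ} (hf : f ^ r = 0) (he : e ^ s = 0) :
    aeval h (∏ k ∈ Finset.Ioo (-s : ℤ) r, (X - C (k : K))) = 0 := by
  let a (i : ℕ) : S := c + (i + 1) * (x - i)
  let b (j : ℕ) : S := c - j * (x + j + 1)
  have ha : ∏ i ∈ Finset.range r, a i = 0 := hφ <| by
    rw [map_zero, ← mul_zero (e ^ r), ← hf]
    exact t.map_prod_eq_e_pow_mul_f_pow φ.toRingHom hc hx r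
  have hb : ∏ j ∈ Finset.range s, b j = 0 := hφ <| by
    rw [map_zero, ← mul_zero (f ^ s), ← he]
    exact t.map_prod_eq_f_pow_mul_e_pow φ.toRingHom hc hx s
  have h_diff (i j : ℕ) : x - ((i - j : ℤ) : S) ∈ Ideal.span {a i, b j} := by
    have h_sub : a i - b j = ((i + j : ℕ) + 1) * (x - ((i - j : ℤ) : S)) := by
      simp only [a, b]
      push_cast
      ring
    have h_unit : IsUnit (((i + j : ℕ) : S) + 1) := by
      simpa using (Nat.cast_add_one_ne_zero (R := K) (i + j)).isUnit.map (algebraMap K S)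
    rw [← Ideal.unit_mul_mem_iff_mem _ h_unit, ← h_sub]
    exact sub_mem (Ideal.subset_span (Set.mem_insert _ _))
      (Ideal.subset_span (Set.mem_insert_of_mem _ rfl))
  have h_prod : ∏ k ∈ Finset.Ioo (-s : ℤ) r, (x - (k : S)) = 0 := by
    simpa [ha, hb] using prod_Ioo_mem_span_pair a b (fun k => x - (k : S)) h_diff r s
  have h_aeval : aeval x (∏ k ∈ Finset.Ioo (-s : ℤ) r, (X - C (k : K))) = 0 := by
    simpa using h_prod
  rw [← hx, aeval_algHom_apply, h_aeval, map_zero]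

open scoped IsMulCommutative in
theorem aeval_prod_eq_zero {e f h : A} (t : Sl2Relations e f h) {r s : ℕ} (hf : f ^ r = 0)
    (he : e ^ s = 0) : aeval h (∏ k ∈ Finset.Ioo (-s : ℤ) r, (X - C (k : K))) = 0 := by
  have h_comm : ∀ y ∈ ({f * e, h} : Set A), ∀ z ∈ ({f * e, h} : Set A), y * z = z * y := by
    rintro y (rfl | rfl) z (rfl | rfl)
    · rfl
    · exact t.commute_f_mul_e_h
    · exact t.commute_f_mul_e_h.symm
    · rfl
  have : IsMulCommutative (Algebra.adjoin K {f * e, h}) := Algebra.isMulCommutative_adjoin K h_comm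
  exact t.aeval_prod_eq_zero_of_injective (φ := (Algebra.adjoin K {f * e, h}).val)
    (c := ⟨f * e, Algebra.subset_adjoin (Set.mem_insert _ _)⟩)
    (x := ⟨h, Algebra.subset_adjoin (Set.mem_insert_of_mem _ rfl)⟩)
    Subtype.val_injective rfl rfl hf he

variable [AddCommGroup V] [Module K V] [FiniteDimensional K V] {e f h : Module.End K V}

theorem iSup_eigenspace_eq_top (t : Sl2Relations e f h) :
    ⨆ μ : K, Module.End.eigenspace h μ = ⊤ := by
  classical
  obtain ⟨s, he⟩ : IsNilpotent e := isNilpotent_of_lie_eq_smul (K := K) (h := h) two_ne_zero <| by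
    rw [t.lie_h_e, two_smul, two_smul]
  obtain ⟨r, hf⟩ : IsNilpotent f := isNilpotent_of_lie_eq_smul (K := K) (h := -h) two_ne_zero <| by
    rw [t.symm.lie_h_e, two_smul, two_smul]
  let weights := (Finset.Ioo (-s : ℤ) r).image (fun k : ℤ => (k : K))
  have h_aeval : aeval h (∏ μ ∈ weights, (X - C μ)) = 0 := by
    rw [Finset.prod_image fun _ _ _ _ h_eq => Int.cast_injective h_eq]
    exact t.aeval_prod_eq_zero hf he
  have h_ker := ker_aeval_prod_X_sub_C_eq_iSup_eigenspace h weights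
  rw [h_aeval, LinearMap.ker_zero] at h_ker
  rw [eq_top_iff, h_ker]
  exact iSup₂_le fun μ _ => le_iSup _ μ

end Sl2Relations

section Freeness

variable {R W : Type*} [CommRing R] [AddCommGroup W] [Module R W]

/-- Multiplication by `X + φ` on the `R[X]`-module `R[X] ⊗ W`. -/
noncomputable def mulXAdd (φ : Module.End R W) : Module.End R (R[X] ⊗[R] W) :=
  kroneckerSum (LinearMap.mulLeft R X) φ

lemma mulXAdd_apply (φ : Module.End R W) (z : R[X] ⊗[R] W) :
    mulXAdd φ z = (X : R[X]) • z + φ.lTensor R[X] z := by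
  induction z with
  | zero => simp
  | add z w hz hw => rw [map_add, hz, hw, map_add, smul_add]; abel
  | tmul p w => rfl

lemma eq_id_of_map_X_smul {F : Module.End R (R[X] ⊗[R] W)}
    (h_X : ∀ z, F ((X : R[X]) • z) = (X : R[X]) • F z) (h_one : ∀ w, F (1 ⊗ₜ w) = 1 ⊗ₜ w) :
    F = LinearMap.id := by
  have h_pow (n : ℕ) (w : W) : F ((X ^ n : R[X]) ⊗ₜ w) = (X ^ n : R[X]) ⊗ₜ w := by
    induction n with
    | zero => rw [pow_zero, h_one]
    | succ n ih => rw [pow_succ', ← smul_eq_mul, ← TensorProduct.smul_tmul', h_X, ih]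
  ext n w
  simpa [← C_mul_X_pow_eq_monomial] using h_pow n w

/-- The substitution `X ↦ X + φ`, sending `p ⊗ w` to `p(X + φ)(1 ⊗ w)`. -/
noncomputable def substXAdd (φ : Module.End R W) : Module.End R (R[X] ⊗[R] W) :=
  TensorProduct.lift <|
    (LinearMap.llcomp R W (R[X] ⊗[R] W) (R[X] ⊗[R] W)).flip (TensorProduct.mk R R[X] W 1) ∘ₗ
      (aeval (mulXAdd φ)).toLinearMap

lemma substXAdd_tmul (φ : Module.End R W) (p : R[X]) (w : W) :
    substXAdd φ (p ⊗ₜ w) = aeval (mulXAdd φ) p (1 ⊗ₜ w) := rfl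

lemma substXAdd_one_tmul (φ : Module.End R W) (w : W) :
    substXAdd φ (1 ⊗ₜ w) = 1 ⊗ₜ w := by
  rw [substXAdd_tmul, map_one, Module.End.one_apply]

lemma substXAdd_X_smul (φ : Module.End R W) (z : R[X] ⊗[R] W) :
    substXAdd φ ((X : R[X]) • z) = mulXAdd φ (substXAdd φ z) := by
  induction z with
  | zero => simp
  | add z w hz hw => rw [smul_add, map_add, hz, hw, map_add, map_add]
  | tmul p w =>
    rw [TensorProduct.smul_tmul', smul_eq_mul, substXAdd_tmul, substXAdd_tmul, map_mul, aeval_X,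
      Module.End.mul_apply]

lemma substXAdd_lTensor (φ : Module.End R W) (z : R[X] ⊗[R] W) :
    substXAdd φ (φ.lTensor R[X] z) = φ.lTensor R[X] (substXAdd φ z) := by
  have h_comm : Commute (φ.lTensor R[X]) (mulXAdd φ) := by
    refine LinearMap.ext fun y => ?_
    simp only [Module.End.mul_apply, mulXAdd_apply, map_add, ← LinearMap.baseChange_eq_ltensor,
      map_smul]
  induction z with
  | zero => simp
  | add z w hz hw => rw [map_add, map_add, hz, hw, map_add, map_add]
  | tmul p w =>
    have h_comm_aeval : Commute (φ.lTensor R[X]) (aeval (mulXAdd φ) p) :=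
      Algebra.commute_of_mem_adjoin_singleton_of_commute (aeval_mem_adjoin_singleton R _) h_comm
    rw [LinearMap.lTensor_tmul, substXAdd_tmul, substXAdd_tmul, ← LinearMap.lTensor_tmul,
      ← Module.End.mul_apply, ← h_comm_aeval.eq, Module.End.mul_apply]

lemma substXAdd_mulXAdd (φ : Module.End R W) (z : R[X] ⊗[R] W) :
    substXAdd (-φ) (mulXAdd φ z) = (X : R[X]) • substXAdd (-φ) z := by
  have h_neg := substXAdd_lTensor (-φ) z
  simp only [LinearMap.lTensor_neg, LinearMap.neg_apply, map_neg, neg_inj] at h_neg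
  rw [mulXAdd_apply, map_add, substXAdd_X_smul, mulXAdd_apply, h_neg, LinearMap.lTensor_neg,
    LinearMap.neg_apply, neg_add_cancel_right]

lemma substXAdd_neg_comp_substXAdd (φ : Module.End R W) :
    substXAdd (-φ) ∘ₗ substXAdd φ = LinearMap.id :=
  eq_id_of_map_X_smul
    (fun z => by rw [LinearMap.comp_apply, substXAdd_X_smul, substXAdd_mulXAdd]; rfl)
    (fun w => by rw [LinearMap.comp_apply, substXAdd_one_tmul, substXAdd_one_tmul])

/-- The `R[X]`-module on which `X` acts by `X + φ` is isomorphic to the one on which it acts by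
multiplication, via the substitution `X ↦ X - φ`. -/
noncomputable def aevalMulXAddEquiv (φ : Module.End R W) :
    Module.AEval' (mulXAdd φ) ≃ₗ[R[X]] R[X] ⊗[R] W :=
  LinearEquiv.ofAEval (mulXAdd φ)
    (LinearEquiv.ofLinearMap (substXAdd (-φ)) (substXAdd φ) (substXAdd_neg_comp_substXAdd φ)
      (by simpa using substXAdd_neg_comp_substXAdd (-φ)))
    (substXAdd_mulXAdd φ)

theorem free_aeval_mulXAdd [Module.Free R W] (φ : Module.End R W) :
    Module.Free R[X] (Module.AEval' (mulXAdd φ)) :=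
  Module.Free.of_equiv (aevalMulXAddEquiv φ).symm

/-- A linear isomorphism intertwining two endomorphisms is an isomorphism of the `R[X]`-modules
they define. -/
noncomputable def aevalCongr {M M' : Type*} [AddCommGroup M] [Module R M] [AddCommGroup M']
    [Module R M'] {a : Module.End R M} {a' : Module.End R M'} (g : M ≃ₗ[R] M')
    (hg : ∀ m, g (a m) = a' (g m)) : Module.AEval' a ≃ₗ[R[X]] Module.AEval' a' :=
  LinearEquiv.ofAEval a (g.trans (Module.AEval'.of a')) fun m => by
    rw [LinearEquiv.trans_apply, Module.End.smul_def, hg, ← Module.AEval'.X_smul_of,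
      LinearEquiv.trans_apply]

variable {V N : Type*} [AddCommGroup V] [Module R V] [AddCommGroup N] [Module R N]

theorem free_aeval_kroneckerSum [Module.Free R V] (a : Module.End R V) {b : Module.End R N}
    (hb : Module.Free R[X] (Module.AEval' b)) :
    Module.Free R[X] (Module.AEval' (kroneckerSum a b)) := by
  let J := Module.Free.ChooseBasisIndex R[X] (Module.AEval' b)
  let g : Module.AEval' b ≃ₗ[R[X]] R[X] ⊗[R] (J →₀ R) :=
    (Module.Free.chooseBasis R[X] (Module.AEval' b)).repr.trans
      (TensorProduct.finsuppScalarRight R R[X] R[X] J).symm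
  let g' : N ≃ₗ[R] R[X] ⊗[R] (J →₀ R) := (Module.AEval'.of b).trans (g.restrictScalars R)
  have hg' (n : N) : g' (b n) = mulXAdd 0 (g' n) := by
    rw [mulXAdd_apply, LinearMap.lTensor_zero, LinearMap.zero_apply, add_zero]
    change g (Module.AEval'.of b (b n)) = X • g (Module.AEval'.of b n)
    rw [← Module.AEval'.X_smul_of, map_smul]
  let F : V ⊗[R] N ≃ₗ[R] R[X] ⊗[R] (V ⊗[R] (J →₀ R)) :=
    (g'.lTensor V).trans (TensorProduct.leftComm R V R[X] (J →₀ R))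
  have hF (z : V ⊗[R] N) : F (kroneckerSum a b z) = mulXAdd (kroneckerSum a 0) (F z) := by
    have h_lTensor := lTensor_kroneckerSum a (g := g'.toLinearMap) hg' z
    exact (congrArg _ h_lTensor).trans (leftComm_kroneckerSum a _ _ _)
  have := free_aeval_mulXAdd (kroneckerSum a (0 : Module.End R (J →₀ R)))
  exact Module.Free.of_equiv (aevalCongr F hF).symm

end Freeness

/-- Membership of a module `N` over the Borel subalgebra `𝔟 = ⟨h, e⟩` in the category `𝒩`: the
operators `e` and `h` define a `𝔟`-module which is finitely generated, `h`-diagonalizable and free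
over `R[e]`. -/
structure InBorelCategory {R N : Type*} [CommRing R] [AddCommGroup N] [Module R N]
    (e h : Module.End R N) : Prop where
  lie_h_e : ⁅h, e⁆ = (2 : R) • e
  isFGUnder : IsFGUnder ![e, h]
  iSup_eigenspace_eq_top : ⨆ μ, Module.End.eigenspace h μ = ⊤
  free : Module.Free R[X] (Module.AEval' e)

theorem InBorelCategory.kroneckerSum {R V N : Type*} [CommRing R] [AddCommGroup V] [Module R V]
    [Module.Finite R V] [Module.Free R V] [AddCommGroup N] [Module R N] {eV hV : Module.End R V}
    {eN hN : Module.End R N} (hN_mem : InBorelCategory eN hN) (hV_lie : ⁅hV, eV⁆ = (2 : R) • eV)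
    (hV_diag : ⨆ μ, Module.End.eigenspace hV μ = ⊤) :
    InBorelCategory (kroneckerSum eV eN) (kroneckerSum hV hN) where
  lie_h_e := by rw [lie_kroneckerSum, hV_lie, hN_mem.lie_h_e, smul_kroneckerSum]
  isFGUnder := by
    convert hN_mem.isFGUnder.kroneckerSum ![eV, hV] using 1
    ext i
    fin_cases i <;> rfl
  iSup_eigenspace_eq_top :=
    iSup_eigenspace_kroneckerSum_eq_top hV_diag hN_mem.iSup_eigenspace_eq_top
  free := free_aeval_kroneckerSum eV hN_mem.free

theorem tensor_preserves_borel_category_general {K V N : Type*} [Field K] [CharZero K]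
    [AddCommGroup V] [Module K V] [FiniteDimensional K V] [AddCommGroup N] [Module K N]
    {eV fV hV : Module.End K V} {eN hN : Module.End K N} (t : Sl2Relations eV fV hV)
    (hN_mem : InBorelCategory eN hN) :
    InBorelCategory (kroneckerSum eV eN) (kroneckerSum hV hN) :=
  hN_mem.kroneckerSum (t.lie_h_e.trans (ofNat_smul_eq_nsmul K 2 eV).symm) t.iSup_eigenspace_eq_top

theorem tensor_preserves_borel_category
    -- a finite dimensional sl₂-module `V`
    (V : Type) [AddCommGroup V] [Module ℂ V] [FiniteDimensional ℂ V]
    (eV fV hV : V →ₗ[ℂ] V)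
    (hVhe : hV ∘ₗ eV - eV ∘ₗ hV = (2 : ℂ) • eV)
    (hVhf : hV ∘ₗ fV - fV ∘ₗ hV = (-2 : ℂ) • fV)
    (hVef : eV ∘ₗ fV - fV ∘ₗ eV = hV)
    -- a `𝔟`-module `N`
    (N : Type) [AddCommGroup N] [Module ℂ N]
    (eN hN : N →ₗ[ℂ] N)
    (hNhe : hN ∘ₗ eN - eN ∘ₗ hN = (2 : ℂ) • eN)
    -- `N` is finitely generated over `U(𝔟)`
    (hfg : ∃ s : Finset N, ∀ p : Submodule ℂ N,
      (∀ x ∈ p, eN x ∈ p) → (∀ x ∈ p, hN x ∈ p) → (↑s : Set N) ⊆ (p : Set N) → p = ⊤)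
    -- `N` is `h`-diagonalizable
    (hdiag : (⨆ c : ℂ, Module.End.eigenspace hN c) = ⊤)
    -- `N` is free over `U(e) = ℂ[e]`
    (hfree : Module.Free (Polynomial ℂ) (Module.AEval' eN)) :
    -- then `V ⊗ N`, with the `𝔟`-module structure given by the operators
    -- `e = eV ⊗ 1 + 1 ⊗ eN` and `h = hV ⊗ 1 + 1 ⊗ hN`, is again finitely
    -- generated, `h`-diagonalizable and free over `ℂ[e]`.
    (∃ s : Finset (V ⊗[ℂ] N), ∀ p : Submodule ℂ (V ⊗[ℂ] N),
      (∀ x ∈ p, (LinearMap.rTensor N eV + LinearMap.lTensor V eN) x ∈ p) →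
      (∀ x ∈ p, (LinearMap.rTensor N hV + LinearMap.lTensor V hN) x ∈ p) →
      (↑s : Set (V ⊗[ℂ] N)) ⊆ (p : Set (V ⊗[ℂ] N)) → p = ⊤) ∧
    ((⨆ c : ℂ, Module.End.eigenspace (LinearMap.rTensor N hV + LinearMap.lTensor V hN) c) = ⊤) ∧
    Module.Free (Polynomial ℂ)
      (Module.AEval' (LinearMap.rTensor N eV + LinearMap.lTensor V eN)) := by
  have t : Sl2Relations eV fV hV :=
    ⟨hVhe.trans (by module), hVhf.trans (by module), hVef⟩
  have hN_mem : InBorelCategory eN hN := ⟨hNhe, isFGUnder_pair.2 hfg, hdiag, hfree⟩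
  have h_tensor := tensor_preserves_borel_category_general t hN_mem
  exact ⟨isFGUnder_pair.1 h_tensor.isFGUnder, h_tensor.iSup_eigenspace_eq_top, h_tensor.free⟩
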